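/- Let G be a 3-regular graph with n vertices and m = 3n/2 edges, and let ℐ' = (H, 𝒟, π) be the PCSF instance constructed from G. If ℐ' has a solution of cost at most 2m + 2n + k, then G has a vertex cover of size at most k. -/

import Mathlib

/-!
Let `A` be the set of vertices `v_i` whose edge `{w, a_i}` is bought by `F`.  A demand
`{a_i, c^ℓ_j}` can only be satisfied if `i ∈ A`, and inspecting the four edges and three demands
of the gadget of `e_j` shows that they contribute at least `3` to the cost, and at least `4` when
`e_j` has no endpoint in `A` (`gadget_bound`).  Summing up, the cost is at least
`2|A| + 4m - cov(A)`, where `cov(A)` is the number of edges of `G` covered by `A`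
(`hcost_lower`).

In a graph of maximum degree `3`, every vertex set `A` contains an independent set `I` with
`cov(A) ≤ 2|A| + |I|` (`exists_indep`): deleting from `A` a vertex having a neighbour in `A`
uncovers at most two edges, and once `A` is independent, `cov(A) ≤ 3|A|`.  Hence
`4m - |I| ≤ 2m + 2n + k`, and since `2m = 3n` the vertex cover `V \ I` has size `n - |I| ≤ k`.
-/

open scoped Classical

noncomputable section

namespace PCSFHard

/-- The vertex set of the graph `H`: vertices `a_i` (`i < n`), `b_j`, `c¹_j`, `c²_j`
(`j < m`), and the central vertex `w`. -/
abbrev HVert (n m : ℕ) := Fin n ⊕ Fin m ⊕ Fin m ⊕ Fin m ⊕ Unit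

variable {n m : ℕ}

def va (i : Fin n) : HVert n m := Sum.inl i
def vb (j : Fin m) : HVert n m := Sum.inr (Sum.inl j)
def vc1 (j : Fin m) : HVert n m := Sum.inr (Sum.inr (Sum.inl j))
def vc2 (j : Fin m) : HVert n m := Sum.inr (Sum.inr (Sum.inr (Sum.inl j)))
def vw : HVert n m := Sum.inr (Sum.inr (Sum.inr (Sum.inr ())))

/-- The edges of `H`: `{w, a_i}`, `{w, c¹_j}`, `{w, c²_j}`, `{c¹_j, b_j}`, `{c²_j, b_j}`. -/
def rel (n m : ℕ) : HVert n m → HVert n m → Prop := fun x y =>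
  (∃ i : Fin n, x = vw ∧ y = va i) ∨
  (∃ j : Fin m, x = vw ∧ y = vc1 j) ∨
  (∃ j : Fin m, x = vw ∧ y = vc2 j) ∨
  (∃ j : Fin m, x = vc1 j ∧ y = vb j) ∨
  (∃ j : Fin m, x = vc2 j ∧ y = vb j)

/-- The graph `H` of the PCSF instance `ℐ'`. -/
def HG (n m : ℕ) : SimpleGraph (HVert n m) := SimpleGraph.fromRel (rel n m)

/-- Edge lengths of `H`: the edges `{w, a_i}` have length `2`, all other edges length `1`. -/
def elen (n m : ℕ) : Sym2 (HVert n m) → ℝ := fun e =>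
  if ∃ i : Fin n, e = s(vw, va i) then 2 else 1

/-- Two vertices are connected in the subgraph `F`. -/
def Sat (F : (HG n m).Subgraph) (x y : HVert n m) : Prop :=
  F.spanningCoe.Reachable x y

/-- Total edge length of a subgraph of `H`. -/
def hlength (F : (HG n m).Subgraph) : ℝ :=
  ∑ e ∈ (Set.toFinite F.edgeSet).toFinset, elen n m e

/-- The cost of a solution `F`: total edge length, plus penalty `3` for every
unconnected demand `{w, b_j}`, plus penalty `1` for every unconnected demand
`{a_i, c^ℓ_j}` with `v_i = e_j^{(ℓ)}`. -/
def hcost (ends : Fin m → Fin n × Fin n) (F : (HG n m).Subgraph) : ℝ :=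
  hlength F
    + (∑ j : Fin m, if Sat F vw (vb j) then 0 else 3)
    + (∑ j : Fin m, if Sat F (va (ends j).1) (vc1 j) then 0 else 1)
    + (∑ j : Fin m, if Sat F (va (ends j).2) (vc2 j) then 0 else 1)

end PCSFHard

open PCSFHard

open PCSFHard

namespace PCSFHard

variable {n m : ℕ}

/-! ### Length of a solution -/

/-- The edges `{w, c¹_j}`, `{w, c²_j}`, `{c¹_j, b_j}`, `{c²_j, b_j}` of the gadget of `e_j`,
indexed by `Fin 4`. -/
def gadgetEdge (j : Fin m) : Fin 4 → Sym2 (HVert n m)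
  | 0 => s(vw, vc1 j)
  | 1 => s(vw, vc2 j)
  | 2 => s(vc1 j, vb j)
  | 3 => s(vc2 j, vb j)

/-- An enumeration of the edges of `H`: spokes `{w, a_i}` and gadget edges. -/
def edgeOf : Fin n ⊕ Fin m × Fin 4 → Sym2 (HVert n m)
  | Sum.inl i => s(vw, va i)
  | Sum.inr (j, t) => gadgetEdge j t

lemma edgeOf_injective : Function.Injective (edgeOf (n := n) (m := m)) := by
  rintro (i | ⟨j, t⟩) (i' | ⟨j', t'⟩) h
  · simpa [edgeOf, va, vw] using h
  · fin_cases t' <;> simp [edgeOf, gadgetEdge, va, vb, vc1, vc2, vw] at h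
  · fin_cases t <;> simp [edgeOf, gadgetEdge, va, vb, vc1, vc2, vw] at h
  · fin_cases t <;> fin_cases t' <;>
      simp [edgeOf, gadgetEdge, vb, vc1, vc2, vw] at h ⊢ <;> exact h

lemma elen_spoke (i : Fin n) : elen n m s(vw, va i) = 2 := if_pos ⟨i, rfl⟩

lemma elen_nonneg (e : Sym2 (HVert n m)) : 0 ≤ elen n m e := by
  unfold elen; split_ifs <;> norm_num

lemma elen_gadgetEdge (j : Fin m) (t : Fin 4) : elen n m (gadgetEdge j t) = 1 := by
  refine if_neg ?_
  rintro ⟨i, h⟩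
  have := edgeOf_injective (a₁ := Sum.inr (j, t)) (a₂ := Sum.inl i) h
  simp at this

/-- The vertices of `G` whose edge `{w, a_i}` belongs to `F`. -/
def bought (F : (HG n m).Subgraph) : Finset (Fin n) :=
  Finset.univ.filter fun i => F.Adj vw (va i)

lemma hlength_lower (F : (HG n m).Subgraph) :
    2 * ((bought F).card : ℝ) + ∑ j : Fin m,
      ((if F.Adj vw (vc1 j) then 1 else 0) + (if F.Adj vw (vc2 j) then 1 else 0)
        + (if F.Adj (vc1 j) (vb j) then 1 else 0) + (if F.Adj (vc2 j) (vb j) then 1 else 0))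
      ≤ hlength F := by
  have h1 : ∑ x : Fin n ⊕ Fin m × Fin 4,
      (if edgeOf x ∈ F.edgeSet then elen n m (edgeOf x) else 0) ≤ hlength F := by
    rw [← Finset.sum_filter, ← Finset.sum_image (f := elen n m) edgeOf_injective.injOn]
    refine Finset.sum_le_sum_of_subset_of_nonneg ?_ fun e _ _ => elen_nonneg e
    intro e he
    obtain ⟨x, hx, rfl⟩ := Finset.mem_image.1 he
    simpa using hx
  refine le_trans (le_of_eq ?_) h1
  rw [Fintype.sum_sum_type, Fintype.sum_prod_type]
  congr 1
  · rw [bought, ← Finset.sum_filter]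
    simp [edgeOf, elen_spoke, mul_comm]
  · refine Finset.sum_congr rfl fun j _ => ?_
    simp only [edgeOf, elen_gadgetEdge, Fin.sum_univ_four]
    simp [gadgetEdge]

/-! ### Connectivity in a solution -/

/-- In `H`, the vertex `a_i` is a leaf attached to `w`, so every connection leaving it uses the
edge `{w, a_i}`. -/
lemma Sat.of_va {F : (HG n m).Subgraph} {i : Fin n} {x : HVert n m} (hx : x ≠ va i)
    (h : Sat F (va i) x) : F.Adj vw (va i) ∧ Sat F vw x := by
  obtain ⟨p⟩ := h
  cases p with
  | nil => exact absurd rfl hx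
  | @cons _ y _ h p =>
    have hF : F.Adj (va i) y := by simpa using h
    have hy : y = vw := by
      have := F.adj_sub hF
      simp only [HG, SimpleGraph.fromRel_adj, rel] at this
      simp [va, vb, vc1, vc2, vw] at this
      exact this.2
    subst hy
    exact ⟨hF.symm, ⟨p⟩⟩

/-- An explicit description of which vertices of a gadget are reachable from `w` in `F`; the
vertices `a_i` are left unconstrained. -/
def Reach (F : (HG n m).Subgraph) : HVert n m → Prop
  | Sum.inl _ => True
  | Sum.inr (Sum.inl j) =>
      (F.Adj vw (vc1 j) ∧ F.Adj (vc1 j) (vb j)) ∨ (F.Adj vw (vc2 j) ∧ F.Adj (vc2 j) (vb j))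
  | Sum.inr (Sum.inr (Sum.inl j)) =>
      F.Adj vw (vc1 j) ∨ (F.Adj (vc1 j) (vb j) ∧ F.Adj (vc2 j) (vb j) ∧ F.Adj vw (vc2 j))
  | Sum.inr (Sum.inr (Sum.inr (Sum.inl j))) =>
      F.Adj vw (vc2 j) ∨ (F.Adj (vc2 j) (vb j) ∧ F.Adj (vc1 j) (vb j) ∧ F.Adj vw (vc1 j))
  | Sum.inr (Sum.inr (Sum.inr (Sum.inr _))) => True

lemma Reach.step {F : (HG n m).Subgraph} {x y : HVert n m} (h : F.Adj x y) (hx : Reach F x) :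
    Reach F y := by
  have hH := F.adj_sub h
  simp only [HG, SimpleGraph.fromRel_adj, rel] at hH
  have h' := h.symm
  obtain ⟨-, (⟨i, rfl, rfl⟩ | ⟨j, rfl, rfl⟩ | ⟨j, rfl, rfl⟩ | ⟨j, rfl, rfl⟩ | ⟨j, rfl, rfl⟩) |
    (⟨i, rfl, rfl⟩ | ⟨j, rfl, rfl⟩ | ⟨j, rfl, rfl⟩ | ⟨j, rfl, rfl⟩ | ⟨j, rfl, rfl⟩)⟩ := hH
  all_goals
    change Reach F _ at hx
    simp only [Reach, va, vb, vc1, vc2, vw] at h h' hx ⊢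
    try tauto

lemma Sat.reach {F : (HG n m).Subgraph} {x : HVert n m} (h : Sat F vw x) : Reach F x := by
  have key : ∀ u v : HVert n m, F.spanningCoe.Walk u v → Reach F u → Reach F v := by
    intro u v p
    induction p with
    | nil => exact id
    | cons h _ ih => exact fun hu => ih (Reach.step (by simpa using h) hu)
  obtain ⟨p⟩ := h
  exact key _ _ p trivial

/-! ### Lower bound on the cost -/

/-- The gadget of an edge with endpoints `u, v` costs at least `3`, and at least `4` when neither
`{w, a_u}` nor `{w, a_v}` is bought. -/
lemma gadget_bound (F : (HG n m).Subgraph) (u v : Fin n) (j : Fin m) :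
    (4 : ℝ) - (if u ∈ bought F ∨ v ∈ bought F then 1 else 0) ≤
      ((if F.Adj vw (vc1 j) then 1 else 0) + (if F.Adj vw (vc2 j) then 1 else 0)
        + (if F.Adj (vc1 j) (vb j) then 1 else 0) + (if F.Adj (vc2 j) (vb j) then 1 else 0))
      + (if Sat F vw (vb j) then 0 else 3)
      + (if Sat F (va u) (vc1 j) then 0 else 1)
      + (if Sat F (va v) (vc2 j) then 0 else 1) := by
  have hb : Sat F vw (vb j) → (F.Adj vw (vc1 j) ∧ F.Adj (vc1 j) (vb j)) ∨
      (F.Adj vw (vc2 j) ∧ F.Adj (vc2 j) (vb j)) := fun h => h.reach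
  have h1 : Sat F (va u) (vc1 j) → u ∈ bought F ∧ (F.Adj vw (vc1 j) ∨
      (F.Adj (vc1 j) (vb j) ∧ F.Adj (vc2 j) (vb j) ∧ F.Adj vw (vc2 j))) := fun h => by
    obtain ⟨h, h'⟩ := h.of_va (by simp [vc1, va])
    exact ⟨by simpa [bought] using h, h'.reach⟩
  have h2 : Sat F (va v) (vc2 j) → v ∈ bought F ∧ (F.Adj vw (vc2 j) ∨
      (F.Adj (vc2 j) (vb j) ∧ F.Adj (vc1 j) (vb j) ∧ F.Adj vw (vc1 j))) := fun h => by
    obtain ⟨h, h'⟩ := h.of_va (by simp [vc2, va])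
    exact ⟨by simpa [bought] using h, h'.reach⟩
  generalize Sat F vw (vb j) = sb at *
  generalize Sat F (va u) (vc1 j) = s1 at *
  generalize Sat F (va v) (vc2 j) = s2 at *
  generalize F.Adj vw (vc1 j) = x1 at *
  generalize F.Adj vw (vc2 j) = x2 at *
  generalize F.Adj (vc1 j) (vb j) = y1 at *
  generalize F.Adj (vc2 j) (vb j) = y2 at *
  by_cases sb <;> by_cases s1 <;> by_cases s2 <;> by_cases x1 <;> by_cases x2 <;>
    by_cases y1 <;> by_cases y2 <;> simp_all <;> first | (norm_num; done) | (split_ifs <;> norm_num)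

/-- The number of edges of `G` having an endpoint in `A`. -/
def cov (ends : Fin m → Fin n × Fin n) (A : Finset (Fin n)) : ℕ :=
  (Finset.univ.filter fun j : Fin m => (ends j).1 ∈ A ∨ (ends j).2 ∈ A).card

lemma hcost_lower (ends : Fin m → Fin n × Fin n) (F : (HG n m).Subgraph) :
    2 * ((bought F).card : ℝ) + 4 * m - cov ends (bought F) ≤ hcost ends F := by
  have h1 := hlength_lower F
  have h2 := Finset.sum_le_sum fun (j : Fin m) (_ : j ∈ Finset.univ) =>
    gadget_bound F (ends j).1 (ends j).2 j
  have h3 : (∑ j : Fin m,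
      (if (ends j).1 ∈ bought F ∨ (ends j).2 ∈ bought F then (1 : ℝ) else 0))
      = cov ends (bought F) := by
    rw [cov, Finset.sum_boole]
  rw [Finset.sum_sub_distrib, h3, Finset.sum_add_distrib, Finset.sum_add_distrib,
    Finset.sum_add_distrib] at h2
  simp only [Finset.sum_const, Finset.card_univ, Fintype.card_fin, nsmul_eq_mul] at h2
  unfold hcost
  linarith

/-! ### Independent sets in cubic graphs -/

/-- Distinct indices `j` name distinct edges of `G`, so a set of indices is no larger than a set
of unordered pairs containing the edges it names. -/
lemma card_index_le {G : SimpleGraph (Fin n)} {ends : Fin m → Fin n × Fin n}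
    (hends : ∀ j, G.Adj (ends j).1 (ends j).2)
    (huniq : ∀ e ∈ G.edgeSet, ∃! j : Fin m, e = s((ends j).1, (ends j).2))
    (S : Finset (Fin m)) (T : Finset (Sym2 (Fin n)))
    (hST : ∀ j ∈ S, s((ends j).1, (ends j).2) ∈ T) : S.card ≤ T.card := by
  refine Finset.card_le_card_of_injOn (fun j => s((ends j).1, (ends j).2)) hST ?_
  intro j _ j' _ h
  exact (huniq _ (hends j)).unique rfl h

/-- Every vertex set `A` contains an independent set `I` with `cov(A) ≤ 2|A| + |I|`. -/
lemma exists_indep {G : SimpleGraph (Fin n)} [DecidableRel G.Adj]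
    (hreg : G.IsRegularOfDegree 3) {ends : Fin m → Fin n × Fin n}
    (hends : ∀ j, G.Adj (ends j).1 (ends j).2)
    (huniq : ∀ e ∈ G.edgeSet, ∃! j : Fin m, e = s((ends j).1, (ends j).2))
    (A : Finset (Fin n)) :
    ∃ I ⊆ A, (∀ u ∈ I, ∀ v ∈ I, ¬ G.Adj u v) ∧ cov ends A ≤ 2 * A.card + I.card := by
  induction A using Finset.strongInduction with
  | H A ih =>
  have hinc : ∀ a j, (ends j).1 = a ∨ (ends j).2 = a →
      s((ends j).1, (ends j).2) ∈ G.incidenceFinset a := by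
    intro a j h
    rw [SimpleGraph.mem_incidenceFinset]
    exact ⟨hends j, by simpa [eq_comm] using h⟩
  have hdeg : ∀ a, (G.incidenceFinset a).card = 3 := fun a => by
    rw [SimpleGraph.card_incidenceFinset_eq_degree, hreg a]
  by_cases hA : ∀ u ∈ A, ∀ v ∈ A, ¬ G.Adj u v
  · refine ⟨A, subset_rfl, hA, ?_⟩
    have h := card_index_le hends huniq
      (Finset.univ.filter fun j : Fin m => (ends j).1 ∈ A ∨ (ends j).2 ∈ A)
      (A.biUnion fun a => G.incidenceFinset a) (by
        intro j hj
        rw [Finset.mem_biUnion]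
        rcases (Finset.mem_filter.1 hj).2 with h | h
        · exact ⟨_, h, hinc _ j (Or.inl rfl)⟩
        · exact ⟨_, h, hinc _ j (Or.inr rfl)⟩)
    have h' := Finset.card_biUnion_le_card_mul A (fun a => G.incidenceFinset a) 3
      fun a _ => (hdeg a).le
    unfold cov
    omega
  · push Not at hA
    obtain ⟨a, ha, b, hb, hab⟩ := hA
    obtain ⟨I, hI, hind, hcov⟩ := ih (A.erase a) (Finset.erase_ssubset ha)
    refine ⟨I, hI.trans (Finset.erase_subset _ _), hind, ?_⟩
    have hcard := Finset.card_erase_add_one ha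
    -- The edges no longer covered are incident to `a`, and `{a, b}` is still covered by `b`.
    have hlost := card_index_le hends huniq
      ((Finset.univ.filter fun j : Fin m => (ends j).1 ∈ A ∨ (ends j).2 ∈ A) \
        (Finset.univ.filter fun j : Fin m => (ends j).1 ∈ A.erase a ∨ (ends j).2 ∈ A.erase a))
      ((G.incidenceFinset a).erase s(a, b)) (by
        intro j hj
        simp only [Finset.mem_sdiff, Finset.mem_filter, Finset.mem_univ, true_and,
          Finset.mem_erase] at hj
        rw [Finset.mem_erase]
        refine ⟨fun h => ?_, hinc a j (by tauto)⟩
        have hba : b ≠ a := hab.ne'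
        rcases Sym2.eq_iff.1 h with ⟨h1, h2⟩ | ⟨h1, h2⟩
        · exact hj.2 (Or.inr (by rw [h2]; exact ⟨hba, hb⟩))
        · exact hj.2 (Or.inl (by rw [h1]; exact ⟨hba, hb⟩)))
    have hmem : s(a, b) ∈ G.incidenceFinset a := by
      rw [SimpleGraph.mem_incidenceFinset]
      exact ⟨hab, by simp⟩
    rw [Finset.card_erase_of_mem hmem, hdeg] at hlost
    have hsd := Finset.le_card_sdiff
      (Finset.univ.filter fun j : Fin m => (ends j).1 ∈ A.erase a ∨ (ends j).2 ∈ A.erase a)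
      (Finset.univ.filter fun j : Fin m => (ends j).1 ∈ A ∨ (ends j).2 ∈ A)
    unfold cov at hcov ⊢
    omega

end PCSFHard

/--
Let `G` be a 3-regular graph with `n` vertices and `m = 3n/2` edges,
and let `ℐ'` be the PCSF instance constructed from `G`.  If `ℐ'` has a solution of
cost at most `2m + 2n + k`, then `G` has a vertex cover of size at most `k`.
-/
theorem stmt_9 {n m : ℕ} (hm : 2 * m = 3 * n)
    (G : SimpleGraph (Fin n)) [DecidableRel G.Adj]
    (hreg : G.IsRegularOfDegree 3)
    (ends : Fin m → Fin n × Fin n)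
    (hends : ∀ j, G.Adj (ends j).1 (ends j).2)
    (huniq : ∀ e ∈ G.edgeSet, ∃! j : Fin m, e = s((ends j).1, (ends j).2))
    (k : ℕ) (F : (HG n m).Subgraph)
    (hF : hcost ends F ≤ 2 * (m : ℝ) + 2 * (n : ℝ) + (k : ℝ)) :
    ∃ C : Finset (Fin n), (∀ u v : Fin n, G.Adj u v → u ∈ C ∨ v ∈ C) ∧ C.card ≤ k := by
  obtain ⟨I, -, hind, hcov⟩ := exists_indep hreg hends huniq (bought F)
  refine ⟨Iᶜ, fun u v huv => ?_, ?_⟩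
  · by_contra! h
    simp only [Finset.mem_compl, not_not] at h
    exact hind u h.1 v h.2 huv
  · have h1 := (hcost_lower ends F).trans hF
    have h2 : (cov ends (bought F) : ℝ) ≤ 2 * (bought F).card + I.card := by exact_mod_cast hcov
    have h3 : (2 * m : ℝ) = 3 * n := by exact_mod_cast hm
    have h4 : (n : ℝ) ≤ k + I.card := by linarith
    have h5 : n ≤ k + I.card := by exact_mod_cast h4
    rw [Finset.card_compl, Fintype.card_fin]
    omega
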